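/- arXiv:math/0605717 — 2 statements merged into one kernel-verified Lean document; each statement's English description precedes it below -/
import Mathlib

section
/- A finite tree Γ has index r < 2 if and only if Γ is isomorphic to one of the Dynkin diagrams A_n (n ≥ 1), D_n (n ≥ 4), E_6, E_7, E_8. -/
/-- `μ` is an eigenvalue of the real matrix `A`. -/
def IsEigen {n : Type*} [Fintype n] (A : Matrix n n ℝ) (μ : ℝ) : Prop :=
  ∃ v : n → ℝ, v ≠ 0 ∧ A.mulVec v = μ • v

/-- The Dynkin diagram Aₙ: the path on n vertices. -/
def AGraph (n : ℕ) : SimpleGraph (Fin n) :=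
  SimpleGraph.fromRel fun i j => (i : ℕ) + 1 = (j : ℕ)

/-- The Dynkin diagram Dₙ (n ≥ 4): the path 0 − 1 − ⋯ − (n−2) with an extra leaf n−1
attached to the second vertex 1. -/
def DGraph (n : ℕ) : SimpleGraph (Fin n) :=
  SimpleGraph.fromRel fun i j =>
    ((i : ℕ) + 1 = (j : ℕ) ∧ (j : ℕ) ≤ n - 2) ∨ ((i : ℕ) = 1 ∧ (j : ℕ) = n - 1)

/-- The Dynkin diagram E₆: path 0 − ⋯ − 4 with leaf 5 attached to the middle vertex 2. -/
def E6Graph : SimpleGraph (Fin 6) :=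
  SimpleGraph.fromRel fun i j =>
    ((i : ℕ) + 1 = (j : ℕ) ∧ (j : ℕ) ≤ 4) ∨ ((i : ℕ) = 2 ∧ (j : ℕ) = 5)

/-- The Dynkin diagram E₇: path 0 − ⋯ − 5 with leaf 6 attached to vertex 2. -/
def E7Graph : SimpleGraph (Fin 7) :=
  SimpleGraph.fromRel fun i j =>
    ((i : ℕ) + 1 = (j : ℕ) ∧ (j : ℕ) ≤ 5) ∨ ((i : ℕ) = 2 ∧ (j : ℕ) = 6)

/-- The Dynkin diagram E₈: path 0 − ⋯ − 6 with leaf 7 attached to vertex 2. -/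
def E8Graph : SimpleGraph (Fin 8) :=
  SimpleGraph.fromRel fun i j =>
    ((i : ℕ) + 1 = (j : ℕ) ∧ (j : ℕ) ≤ 6) ∨ ((i : ℕ) = 2 ∧ (j : ℕ) = 7)

namespace Dyn

/-- Attach a new leaf `none` to the vertex `w`. -/
def Ext {W : Type*} (H : SimpleGraph W) (w : W) : SimpleGraph (Option W) where
  Adj a b := match a, b with
    | none, none => False
    | none, some b => b = w
    | some a, none => a = w
    | some a, some b => H.Adj a b
  symm := ⟨by rintro (_ | a) (_ | b) h <;> first | exact h | exact H.adj_symm h⟩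
  loopless := ⟨by rintro (_ | a) h <;> first | exact h | exact H.loopless.irrefl _ h⟩

section
variable {W : Type*} (H : SimpleGraph W) (w : W)
@[simp] lemma ext_nn : (Ext H w).Adj none none ↔ False := Iff.rfl
@[simp] lemma ext_ns (b : W) : (Ext H w).Adj none (some b) ↔ b = w := Iff.rfl
@[simp] lemma ext_sn (b : W) : (Ext H w).Adj (some b) none ↔ b = w := Iff.rfl
@[simp] lemma ext_ss (a b : W) : (Ext H w).Adj (some a) (some b) ↔ H.Adj a b := Iff.rfl
end

instance {W : Type*} (H : SimpleGraph W) (w : W) [DecidableEq W] [DecidableRel H.Adj] :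
    DecidableRel (Ext H w).Adj := fun a b => match a, b with
    | none, none => isFalse (fun h => h)
    | none, some b => decidable_of_iff (b = w) Iff.rfl
    | some a, none => decidable_of_iff (a = w) Iff.rfl
    | some a, some b => decidable_of_iff (H.Adj a b) Iff.rfl

@[simp] lemma a_adj {n : ℕ} (i j : Fin n) :
    (AGraph n).Adj i j ↔ (i : ℕ) + 1 = j ∨ (j : ℕ) + 1 = i := by
  simp only [AGraph, SimpleGraph.fromRel_adj, ne_eq, Fin.ext_iff]
  omega

instance (n : ℕ) : DecidableRel (AGraph n).Adj := fun i j => decidable_of_iff _ (a_adj i j).symm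

/-- A nonzero nonnegative subharmonic (for `2 - A`) vector. -/
def Bad {W : Type*} (H : SimpleGraph W) : Prop :=
  ∃ x : W → ℕ, (∃ i, x i ≠ 0) ∧
    ∀ i, ∃ s : Finset W, (∀ j ∈ s, H.Adj i j) ∧ 2 * x i ≤ ∑ j ∈ s, x j

/-- A positive strictly superharmonic vector. -/
def Good {W : Type*} (H : SimpleGraph W) : Prop :=
  ∃ x : W → ℕ, (∀ i, 0 < x i) ∧
    ∀ i, ∃ s : Finset W, (∀ j, H.Adj i j → j ∈ s) ∧ ∑ j ∈ s, x j < 2 * x i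

lemma Bad.map {W W' : Type*} {H : SimpleGraph W} {H' : SimpleGraph W'} (hb : Bad H)
    (f : W → W') (hf : Function.Injective f) (hom : ∀ a b, H.Adj a b → H'.Adj (f a) (f b)) :
    Bad H' := by
  classical
  obtain ⟨x, ⟨i, hi⟩, hx⟩ := hb
  refine ⟨Function.extend f x 0, ⟨f i, by rwa [hf.extend_apply]⟩, fun v => ?_⟩
  by_cases hv : ∃ a, f a = v
  · obtain ⟨a, rfl⟩ := hv
    obtain ⟨s, hs, hle⟩ := hx a
    refine ⟨s.image f, ?_, ?_⟩
    · intro j hj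
      obtain ⟨b, hb, rfl⟩ := Finset.mem_image.1 hj
      exact hom _ _ (hs b hb)
    · rw [Finset.sum_image (fun a _ b _ h => hf h)]
      simpa only [hf.extend_apply] using hle
  · exact ⟨∅, by simp, by simp [Function.extend_apply' _ _ _ hv]⟩

lemma Bad.iso {W W' : Type*} {H : SimpleGraph W} {H' : SimpleGraph W'} (hb : Bad H)
    (e : H ≃g H') : Bad H' :=
  hb.map e e.injective fun _ _ h => e.map_adj_iff.2 h

lemma Good.iso {W W' : Type*} {H : SimpleGraph W} {H' : SimpleGraph W'} (hg : Good H)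
    (e : H ≃g H') : Good H' := by
  classical
  obtain ⟨x, hx, h⟩ := hg
  refine ⟨fun v => x (e.symm v), fun v => hx _, fun v => ?_⟩
  obtain ⟨s, hs, hlt⟩ := h (e.symm v)
  refine ⟨s.image e, fun j hj => ?_, ?_⟩
  · exact Finset.mem_image.2 ⟨e.symm j, hs _ (e.symm.map_adj_iff.2 hj), by simp⟩
  · rw [Finset.sum_image (fun a _ b _ h => e.injective h)]
    simpa using hlt

/-! ### Spectral part -/

lemma Good.lt {V : Type*} [Fintype V] {G : SimpleGraph V} [DecidableRel G.Adj] (hg : Good G)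
    {r : ℝ} (hr : IsEigen (G.adjMatrix ℝ) r) : r < 2 := by
  classical
  obtain ⟨x, hx, h⟩ := hg
  obtain ⟨v, hv0, hv⟩ := hr
  obtain ⟨a, ha⟩ := Function.ne_iff.1 hv0
  have hxr : ∀ i, (0 : ℝ) < x i := fun i => by exact_mod_cast hx i
  obtain ⟨i, -, hi⟩ := Finset.exists_max_image Finset.univ (fun i => |v i| / x i) ⟨a, by simp⟩
  have hmax : ∀ j, |v j| ≤ |v i| / x i * x j := fun j => by
    have := hi j (by simp)
    rwa [div_le_iff₀ (hxr j)] at this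
  have hvi : 0 < |v i| := by
    have h1 : 0 < |v a| / x a := div_pos (abs_pos.2 ha) (hxr a)
    have h2 := h1.trans_le (hi a (by simp))
    exact (div_pos_iff_of_pos_right (hxr i)).1 h2
  obtain ⟨s, hs, hlt⟩ := h i
  have hlt' : ∑ j ∈ s, (x j : ℝ) < 2 * x i := by exact_mod_cast hlt
  have he := congrFun hv i
  rw [SimpleGraph.adjMatrix_mulVec_apply] at he
  simp only [Pi.smul_apply, smul_eq_mul] at he
  by_contra hr2
  push Not at hr2
  have : r * |v i| ≤ |v i| / x i * ∑ j ∈ s, (x j : ℝ) := calc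
    r * |v i| = |∑ u ∈ G.neighborFinset i, v u| := by
      rw [he, abs_mul, abs_of_nonneg (by linarith : (0 : ℝ) ≤ r)]
    _ ≤ ∑ u ∈ G.neighborFinset i, |v u| := Finset.abs_sum_le_sum_abs _ _
    _ ≤ ∑ u ∈ s, |v u| := Finset.sum_le_sum_of_subset_of_nonneg
        (fun j hj => hs j (by simpa using hj)) (fun _ _ _ => abs_nonneg _)
    _ ≤ ∑ u ∈ s, |v i| / x i * x u := Finset.sum_le_sum fun j _ => hmax j
    _ = _ := by rw [Finset.mul_sum]
  have h3 : |v i| / x i * ∑ j ∈ s, (x j : ℝ) < |v i| / x i * (2 * x i) :=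
    mul_lt_mul_of_pos_left hlt' (div_pos hvi (hxr i))
  have h4 : |v i| / x i * (2 * x i) = 2 * |v i| := by
    have := (hxr i).ne'
    field_simp
  nlinarith

lemma Bad.le {V : Type*} [Fintype V] {G : SimpleGraph V} [DecidableRel G.Adj] (hb : Bad G)
    {r : ℝ} (hr : ∀ μ, IsEigen (G.adjMatrix ℝ) μ → μ ≤ r) : 2 ≤ r := by
  classical
  obtain ⟨x, ⟨a, ha⟩, h⟩ := hb
  set A := G.adjMatrix ℝ with hA
  have hH : (r • (1 : Matrix V V ℝ) - A).IsHermitian := by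
    apply Matrix.IsHermitian.sub
    · rw [Matrix.IsHermitian, Matrix.conjTranspose_smul]; simp
    · rw [Matrix.IsHermitian, Matrix.conjTranspose_eq_transpose_of_trivial]
      exact SimpleGraph.transpose_adjMatrix G
  have hP : (r • (1 : Matrix V V ℝ) - A).PosSemidef := by
    rw [hH.posSemidef_iff_eigenvalues_nonneg]
    intro i
    have h1 := hH.mulVec_eigenvectorBasis i
    have h2 : IsEigen A (r - hH.eigenvalues i) := by
      refine ⟨(hH.eigenvectorBasis i).ofLp, ?_, ?_⟩
      · intro h0
        have := hH.eigenvectorBasis.orthonormal.ne_zero i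
        apply this
        ext j
        exact congrFun h0 j
      · rw [Matrix.sub_mulVec, Matrix.smul_mulVec, Matrix.one_mulVec] at h1
        rw [sub_smul, ← h1]
        simp
    have := hr _ h2
    simp only [Pi.zero_apply]
    linarith
  let y : V → ℝ := fun i => x i
  have h5 := hP.dotProduct_mulVec_nonneg y
  rw [Matrix.sub_mulVec, Matrix.smul_mulVec, Matrix.one_mulVec, dotProduct_sub,
    dotProduct_smul] at h5
  simp only [star_trivial, smul_eq_mul] at h5
  have h6 : 2 * (y ⬝ᵥ y) ≤ y ⬝ᵥ (A.mulVec y) := by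
    simp only [dotProduct, Finset.mul_sum]
    apply Finset.sum_le_sum
    intro i _
    obtain ⟨s, hs, hle⟩ := h i
    have hle' : 2 * y i ≤ ∑ j ∈ s, y j := by simp only [y]; exact_mod_cast hle
    have h7 : ∑ j ∈ s, y j ≤ (A.mulVec y) i := by
      rw [hA, SimpleGraph.adjMatrix_mulVec_apply]
      exact Finset.sum_le_sum_of_subset_of_nonneg
        (fun j hj => by simpa using hs j hj) (fun j _ _ => Nat.cast_nonneg (x j))
    have : 0 ≤ y i := Nat.cast_nonneg (x i)
    nlinarith
  have h8 : 0 < y ⬝ᵥ y := by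
    apply Finset.sum_pos' (fun i _ => mul_self_nonneg _) ⟨a, by simp, ?_⟩
    have : (y a) ≠ 0 := by simpa [y] using ha
    positivity
  by_contra h9
  push Not at h9
  nlinarith

/-! ### Isomorphisms -/

/-- Transport of a leaf extension. -/
def extIso {W W' : Type*} {H : SimpleGraph W} {H' : SimpleGraph W'} (e : H ≃g H') (w : W) :
    Ext H w ≃g Ext H' (e w) where
  toEquiv := Equiv.optionCongr e.toEquiv
  map_rel_iff' := by
    rintro (_ | a) (_ | b)
    · simp
    · simp
    · simp
    · exact e.map_adj_iff

/-- Two leaves may be attached in any order. -/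
def swapIso {W : Type*} (H : SimpleGraph W) (a b : W) :
    Ext (Ext H a) (some b) ≃g Ext (Ext H b) (some a) where
  toFun x := match x with
    | none => some none
    | some none => none
    | some (some c) => some (some c)
  invFun x := match x with
    | none => some none
    | some none => none
    | some (some c) => some (some c)
  left_inv := by rintro (_ | _ | c) <;> rfl
  right_inv := by rintro (_ | _ | c) <;> rfl
  map_rel_iff' := by
    rintro (_ | _ | c) (_ | _ | d) <;> simp

/-- Reversal of the path. -/
def revIso (n : ℕ) : AGraph n ≃g AGraph n where
  toEquiv := Fin.revPerm
  map_rel_iff' := by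
    intro a b
    simp [Fin.val_rev]
    omega

/-- Attaching a leaf at the end of a path. -/
def aSuccIso (n : ℕ) (w : Fin n) (hw : (w : ℕ) + 1 = n) : Ext (AGraph n) w ≃g AGraph (n + 1) where
  toEquiv := finSuccEquivLast.symm
  map_rel_iff' := by
    rintro (_ | a) (_ | b) <;> simp [Fin.ext_iff] <;> omega

/-- Attaching a leaf at the start of a path. -/
def aZeroIso (n : ℕ) (w : Fin n) (hw : (w : ℕ) = 0) : Ext (AGraph n) w ≃g AGraph (n + 1) where
  toEquiv := (finSuccEquiv n).symm
  map_rel_iff' := by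
    rintro (_ | a) (_ | b) <;> simp [Fin.ext_iff] <;> omega

/-- `Dₙ₊₁` as an extension. -/
def dIso (n : ℕ) (hn : 3 ≤ n) (w : Fin n) (hw : (w : ℕ) = 1) :
    Ext (AGraph n) w ≃g DGraph (n + 1) where
  toEquiv := finSuccEquivLast.symm
  map_rel_iff' := by
    rintro (_ | a) (_ | b) <;> simp [DGraph, Fin.ext_iff] <;> omega

/-- `E₆` as an extension. -/
def e6Iso : Ext (AGraph 5) 2 ≃g E6Graph where
  toEquiv := finSuccEquivLast.symm
  map_rel_iff' := by
    rintro (_ | a) (_ | b) <;> simp [E6Graph, Fin.ext_iff] <;> omega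

/-- `E₇` as an extension. -/
def e7Iso : Ext (AGraph 6) 2 ≃g E7Graph where
  toEquiv := finSuccEquivLast.symm
  map_rel_iff' := by
    rintro (_ | a) (_ | b) <;> simp [E7Graph, Fin.ext_iff] <;> omega

/-- `E₈` as an extension. -/
def e8Iso : Ext (AGraph 7) 2 ≃g E8Graph where
  toEquiv := finSuccEquivLast.symm
  map_rel_iff' := by
    rintro (_ | a) (_ | b) <;> simp [E8Graph, Fin.ext_iff] <;> omega

/-- The two short legs of `D` are exchangeable. -/
def legIso (n : ℕ) (z w : Fin n) (hz : (z : ℕ) = 0) (hw : (w : ℕ) = 1) :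
    Ext (AGraph n) w ≃g Ext (AGraph n) w where
  toEquiv := Equiv.swap none (some z)
  map_rel_iff' := by
    rintro (_ | a) (_ | b)
    · simp
    · by_cases hb : b = z
      · subst hb; simp [Fin.ext_iff, hz, hw]
      · rw [Equiv.swap_apply_left, Equiv.swap_apply_of_ne_of_ne (by simp) (by simpa using hb)]
        simp [Fin.ext_iff] at *; omega
    · by_cases hb : a = z
      · subst hb; simp [Fin.ext_iff, hz, hw]
      · rw [Equiv.swap_apply_left, Equiv.swap_apply_of_ne_of_ne (by simp) (by simpa using hb)]
        simp [Fin.ext_iff] at *; omega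
    · by_cases ha : a = z <;> by_cases hb : b = z
      · subst ha hb; simp
      · subst ha
        rw [Equiv.swap_apply_right, Equiv.swap_apply_of_ne_of_ne (by simp) (by simpa using hb)]
        simp [Fin.ext_iff] at *; omega
      · subst hb
        rw [Equiv.swap_apply_right, Equiv.swap_apply_of_ne_of_ne (by simp) (by simpa using ha)]
        simp [Fin.ext_iff] at *; omega
      · rw [Equiv.swap_apply_of_ne_of_ne (by simp) (by simpa using ha),
          Equiv.swap_apply_of_ne_of_ne (by simp) (by simpa using hb)]

lemma bad_of_filter {W : Type*} [Fintype W] (H : SimpleGraph W) [DecidableRel H.Adj] (x : W → ℕ)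
    (h0 : ∃ i, x i ≠ 0) (h : ∀ i, 2 * x i ≤ ∑ j ∈ Finset.univ.filter (H.Adj i), x j) : Bad H :=
  ⟨x, h0, fun i => ⟨_, by simp, h i⟩⟩

lemma good_of_filter {W : Type*} [Fintype W] (H : SimpleGraph W) [DecidableRel H.Adj] (x : W → ℕ)
    (h0 : ∀ i, 0 < x i) (h : ∀ i, ∑ j ∈ Finset.univ.filter (H.Adj i), x j < 2 * x i) : Good H :=
  ⟨x, h0, fun i => ⟨_, by simp, h i⟩⟩

/-- vector on an extension -/
def ov {W : Type*} (c : ℕ) (x : W → ℕ) : Option W → ℕ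
  | none => c
  | some i => x i

lemma bad_e8 : Bad (Ext (AGraph 8) 2) :=
  bad_of_filter _ (ov 3 ![2, 4, 6, 5, 4, 3, 2, 1]) ⟨none, by decide⟩ (by decide +kernel)
lemma bad_e7 : Bad (Ext (AGraph 7) 3) :=
  bad_of_filter _ (ov 2 ![1, 2, 3, 4, 3, 2, 1]) ⟨none, by decide⟩ (by decide +kernel)
lemma bad_e6 : Bad (Ext (Ext (AGraph 5) 2) none) :=
  bad_of_filter _ (ov 1 (ov 2 ![1, 2, 3, 2, 1])) ⟨none, by decide⟩ (by decide +kernel)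
lemma good_e6 : Good (Ext (AGraph 5) 2) :=
  good_of_filter _ (ov 11 ![8, 15, 21, 15, 8]) (by decide) (by decide +kernel)
lemma good_e7 : Good (Ext (AGraph 6) 2) :=
  good_of_filter _ (ov 49 ![34, 66, 96, 75, 52, 27]) (by decide) (by decide +kernel)
lemma good_e8 : Good (Ext (AGraph 7) 2) :=
  good_of_filter _ (ov 136 ![92, 182, 270, 220, 168, 114, 58]) (by decide) (by decide +kernel)

lemma bad_ext {W W' : Type*} {H : SimpleGraph W} {H' : SimpleGraph W'} {w : W} (f : W → W')
    (hf : Function.Injective f) (hom : ∀ a b, H.Adj a b → H'.Adj (f a) (f b)) :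
    Function.Injective (Option.map f) ∧
    ∀ a b, (Ext H w).Adj a b → (Ext H' (f w)).Adj (Option.map f a) (Option.map f b) := by
  refine ⟨Option.map_injective hf, ?_⟩
  rintro (_ | a) (_ | b) h
  · exact h
  · exact congrArg f h
  · exact congrArg f h
  · exact hom _ _ h

/-- shift of paths -/
def sh {m n : ℕ} (c : ℕ) (h : m + c ≤ n) (i : Fin m) : Fin n := ⟨i + c, by omega⟩

lemma sh_inj {m n : ℕ} (c : ℕ) (h : m + c ≤ n) : Function.Injective (sh c h) := by
  intro a b hab
  simp [sh, Fin.ext_iff] at *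
  omega

lemma sh_hom {m n : ℕ} (c : ℕ) (h : m + c ≤ n) (a b : Fin m) (hab : (AGraph m).Adj a b) :
    (AGraph n).Adj (sh c h a) (sh c h b) := by
  simp [sh] at *
  omega

lemma bad_T3 {n : ℕ} (k : Fin n) (h1 : 3 ≤ (k : ℕ)) (h2 : (k : ℕ) + 4 ≤ n) :
    Bad (Ext (AGraph n) k) := by
  have hc : 7 + ((k : ℕ) - 3) ≤ n := by omega
  have := bad_ext (w := 3) (sh _ hc) (sh_inj _ hc) (sh_hom _ hc)
  have hk : sh _ hc 3 = k := by simp [sh, Fin.ext_iff]; omega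
  rw [hk] at this
  exact bad_e7.map _ this.1 this.2

lemma bad_T2 {n : ℕ} (k : Fin n) (h1 : (k : ℕ) = 2) (h2 : 8 ≤ n) :
    Bad (Ext (AGraph n) k) := by
  have hc : 8 + 0 ≤ n := by omega
  have := bad_ext (w := 2) (sh _ hc) (sh_inj _ hc) (sh_hom _ hc)
  have hk : sh _ hc 2 = k := by simp [sh, Fin.ext_iff]; omega
  rw [hk] at this
  exact bad_e8.map _ this.1 this.2

lemma bad_T222 {n : ℕ} (k : Fin n) (h1 : 2 ≤ (k : ℕ)) (h2 : (k : ℕ) + 3 ≤ n) :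
    Bad (Ext (Ext (AGraph n) k) none) := by
  have hc : 5 + ((k : ℕ) - 2) ≤ n := by omega
  have h := bad_ext (w := 2) (sh _ hc) (sh_inj _ hc) (sh_hom _ hc)
  have hk : sh _ hc 2 = k := by simp [sh, Fin.ext_iff]; omega
  rw [hk] at h
  have hh := bad_ext (w := none) _ h.1 h.2
  exact bad_e6.map _ hh.1 hh.2

/-- extended `D` is bad -/
lemma bad_D' {n : ℕ} (k b : Fin n) (h1 : 1 ≤ (k : ℕ)) (hkb : k ≤ b) (h2 : (b : ℕ) + 2 ≤ n) :
    Bad (Ext (Ext (AGraph n) k) (some b)) := by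
  classical
  have hkb' : (k : ℕ) ≤ b := hkb
  let g : Fin n → ℕ := fun i => if (k : ℕ) ≤ i ∧ (i : ℕ) ≤ b then 2 else
    if (i : ℕ) + 1 = k ∨ (i : ℕ) = b + 1 then 1 else 0
  refine ⟨ov 1 (ov 1 g), ⟨none, by simp [ov]⟩, ?_⟩
  rintro (_ | _ | i)
  · exact ⟨{some (some b)}, by simp, by simp [ov, g, hkb]⟩
  · exact ⟨{some (some k)}, by simp, by simp [ov, g, hkb]⟩
  · by_cases hi : (k : ℕ) ≤ i ∧ (i : ℕ) ≤ b
    · let p : Option (Option (Fin n)) := if i = k then some none else some (some ⟨i - 1, by omega⟩)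
      let q : Option (Option (Fin n)) := if i = b then none else some (some ⟨i + 1, by omega⟩)
      let p' : Fin n := ⟨i - 1, by omega⟩
      let q' : Fin n := ⟨i + 1, by omega⟩
      by_cases hk : i = k <;> by_cases hb : i = b
      · refine ⟨{some (some p'), some (some q'), none, some none}, ?_, ?_⟩
        · simp [p', q', hk, ← hb]; omega
        · rw [Finset.sum_insert, Finset.sum_insert, Finset.sum_insert, Finset.sum_singleton] <;>
            simp [ov, g, p', q', Fin.ext_iff] at * <;> grind
      · refine ⟨{some (some p'), some (some q'), some none}, ?_, ?_⟩
        · simp [p', q', hk]; omega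
        · rw [Finset.sum_insert, Finset.sum_insert, Finset.sum_singleton] <;>
            simp [ov, g, p', q', Fin.ext_iff] at * <;> grind
      · refine ⟨{some (some p'), some (some q'), none}, ?_, ?_⟩
        · simp [p', q', hb] ; simp [Fin.ext_iff] at *; omega
        · rw [Finset.sum_insert, Finset.sum_insert, Finset.sum_singleton] <;>
            simp [ov, g, p', q', Fin.ext_iff] at * <;> grind
      · refine ⟨{some (some p'), some (some q')}, ?_, ?_⟩
        · simp [p', q', Fin.ext_iff] at *; omega
        · rw [Finset.sum_insert, Finset.sum_singleton] <;>
            simp [ov, g, p', q', Fin.ext_iff] at * <;> grind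
    · by_cases ha : (i : ℕ) + 1 = k
      · exact ⟨{some (some k)}, by simp [ha], by simp only [ov, g, Finset.sum_singleton]; grind⟩
      · by_cases hc : (i : ℕ) = b + 1
        · exact ⟨{some (some b)}, by simp [hc], by simp only [ov, g, Finset.sum_singleton]; grind⟩
        · exact ⟨∅, by simp, by simp only [ov, g, Finset.sum_empty]; grind⟩

lemma bad_D {n : ℕ} (k b : Fin n) (h1 : 1 ≤ (k : ℕ)) (h2 : (k : ℕ) + 2 ≤ n)
    (h3 : 1 ≤ (b : ℕ)) (h4 : (b : ℕ) + 2 ≤ n) :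
    Bad (Ext (Ext (AGraph n) k) (some b)) := by
  rcases le_total k b with h | h
  · exact bad_D' k b h1 h h4
  · exact (bad_D' b k h3 h h2).iso (swapIso _ _ _)

/-! ### Good graphs -/

lemma sum_path {n : ℕ} (i : Fin n) (g : ℕ → ℕ) :
    ∑ j ∈ Finset.univ.filter ((AGraph n).Adj i), g (j + 1) ≤ g i + g (i + 2) := by
  have h1 : ∑ j ∈ Finset.univ.filter ((AGraph n).Adj i), g (j + 1) =
      ∑ t ∈ (Finset.univ.filter ((AGraph n).Adj i)).image (fun j : Fin n => (j : ℕ) + 1), g t := by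
    rw [Finset.sum_image]
    intro a _ b _ h
    simp at h
    exact Fin.ext h
  rw [h1]
  calc _ ≤ ∑ t ∈ ({(i : ℕ), (i : ℕ) + 2} : Finset ℕ), g t := by
        apply Finset.sum_le_sum_of_subset
        intro t ht
        simp at ht ⊢
        omega
    _ = _ := by rw [Finset.sum_pair (by omega)]

lemma good_A (n : ℕ) : Good (AGraph n) := by
  refine good_of_filter _ (fun i => (fun t => t * (n + 1 - t)) ((i : ℕ) + 1)) ?_ ?_
  · intro i
    have := i.2
    exact Nat.mul_pos (by omega) (by omega)
  · intro i
    refine (sum_path i (fun t => t * (n + 1 - t))).trans_lt ?_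
    obtain ⟨m, hm⟩ := Nat.exists_eq_add_of_lt i.2
    generalize (i : ℕ) = a at *
    subst hm
    have e1 : a + m + 1 + 1 - a = m + 2 := by omega
    have e2 : a + m + 1 + 1 - (a + 2) = m := by omega
    have e3 : a + m + 1 + 1 - (a + 1) = m + 1 := by omega
    simp only [e1, e2, e3]
    nlinarith

lemma good_D {n : ℕ} (hn : 3 ≤ n) (w : Fin n) (hw : (w : ℕ) = 1) : Good (Ext (AGraph n) w) := by
  classical
  let g : ℕ → ℕ := fun t => if t = 0 then 0 else if t = 1 then n * (n + 1) else
    2 * (n + 1 - t) * (n + t)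
  refine ⟨ov (n * (n + 1)) (fun i => g (i + 1)), ?_, ?_⟩
  · rintro (_ | i)
    · simp only [ov]; positivity
    · have := i.2
      simp only [ov, g]
      rw [if_neg (by omega)]
      split_ifs
      · positivity
      · have : 0 < n + 1 - (i + 1) := by omega
        positivity
  · rintro (_ | i)
    · refine ⟨{some w}, ?_, ?_⟩
      · rintro (_ | j) <;> simp
      · simp [ov, g, hw]
        obtain ⟨m, rfl⟩ := Nat.exists_eq_add_of_le hn
        have : 3 + m - 1 = m + 2 := by omega
        simp only [this]
        nlinarith
    · have hs := sum_path i g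
      by_cases hi : i = w
      · refine ⟨insert none ((Finset.univ.filter ((AGraph n).Adj i)).image some), ?_, ?_⟩
        · rintro (_ | j) <;> simp
        · rw [Finset.sum_insert (by simp), Finset.sum_image (by simp)]
          simp only [ov]
          refine (Nat.add_le_add_left hs _).trans_lt ?_
          subst hi
          simp only [hw, g]
          obtain ⟨m, rfl⟩ := Nat.exists_eq_add_of_le hn
          have e1 : 3 + m + 1 - (1 + 2) = m + 1 := by omega
          have e2 : 3 + m + 1 - (1 + 1) = m + 2 := by omega
          simp [e1, e2]
          nlinarith
      · refine ⟨(Finset.univ.filter ((AGraph n).Adj i)).image some, ?_, ?_⟩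
        · rintro (_ | j) <;> simp [hi]
        · rw [Finset.sum_image (by simp)]
          simp only [ov]
          refine hs.trans_lt ?_
          have hi' : (i : ℕ) ≠ 1 := by rwa [← hw, Ne, ← Fin.ext_iff]
          obtain ⟨m, hm⟩ := Nat.exists_eq_add_of_lt i.2
          generalize (i : ℕ) = a at *
          simp only [g]
          subst hm
          have e1 : a + m + 1 + 1 - a = m + 2 := by omega
          have e2 : a + m + 1 + 1 - (a + 2) = m := by omega
          have e3 : a + m + 1 + 1 - (a + 1) = m + 1 := by omega
          simp only [e1, e2, e3]
          rcases Nat.eq_zero_or_pos a with rfl | ha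
          · simp; nlinarith
          · rw [if_neg (by omega), if_neg (by omega), if_neg (by omega), if_neg (by omega),
              if_neg (by omega), if_neg (by omega)]
            nlinarith

/-! ### Classification -/

/-- Dynkin diagrams in extension form. -/
def IsDyn {V : Type*} (G : SimpleGraph V) : Prop :=
  (∃ n, 1 ≤ n ∧ Nonempty (G ≃g AGraph n)) ∨
  ∃ (n : ℕ) (k : Fin n), Nonempty (G ≃g Ext (AGraph n) k) ∧ 1 ≤ (k : ℕ) ∧ 2 * (k : ℕ) + 1 ≤ n ∧
    ((k : ℕ) = 1 ∨ ((k : ℕ) = 2 ∧ n ≤ 7))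

lemma dyn_T' {V : Type*} {G : SimpleGraph V} (hG : ¬ Bad G) {n : ℕ} (k : Fin n)
    (e : G ≃g Ext (AGraph n) k) (h1 : 1 ≤ (k : ℕ)) (h2 : 2 * (k : ℕ) + 1 ≤ n) : IsDyn G := by
  refine Or.inr ⟨n, k, ⟨e⟩, h1, h2, ?_⟩
  by_contra hc
  apply hG
  by_cases h3 : 3 ≤ (k : ℕ)
  · exact (bad_T3 k h3 (by omega)).iso e.symm
  · exact (bad_T2 k (by omega) (by omega)).iso e.symm

lemma dyn_T {V : Type*} {G : SimpleGraph V} (hG : ¬ Bad G) {n : ℕ} (k : Fin n)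
    (e : G ≃g Ext (AGraph n) k) (h1 : 1 ≤ (k : ℕ)) (h2 : (k : ℕ) + 2 ≤ n) : IsDyn G := by
  by_cases h : 2 * (k : ℕ) + 1 ≤ n
  · exact dyn_T' hG k e h1 h
  · have hv : ((revIso n k : Fin n) : ℕ) = n - (k + 1) := Fin.val_rev k
    exact dyn_T' hG (revIso n k) (e.trans (extIso (revIso n) k)) (by omega) (by omega)

lemma dyn_step {V W : Type*} {G : SimpleGraph V} (hG : ¬ Bad G) {H : SimpleGraph W} (w : W)
    (e : G ≃g Ext H w) (hH : IsDyn H) : IsDyn G := by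
  rcases hH with ⟨n, hn, ⟨f⟩⟩ | ⟨n, k, ⟨f⟩, h1, h2, h3⟩
  · have e' := e.trans (extIso f w)
    generalize f w = b at e'
    have := b.2
    by_cases h0 : (b : ℕ) = 0
    · exact Or.inl ⟨n + 1, by omega, ⟨e'.trans (aZeroIso n b h0)⟩⟩
    by_cases hl : (b : ℕ) + 1 = n
    · exact Or.inl ⟨n + 1, by omega, ⟨e'.trans (aSuccIso n b hl)⟩⟩
    exact dyn_T hG b e' (by omega) (by omega)
  · have e' := e.trans (extIso f w)
    generalize f w = b at e'
    have hz (z : Fin n) (h0 : (z : ℕ) = 0) (e' : G ≃g Ext (Ext (AGraph n) k) (some z)) :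
        IsDyn G := by
      have e2 := (e'.trans (swapIso _ _ _)).trans (extIso (aZeroIso n z h0) (some k))
      have hv : ((aZeroIso n z h0 (some k) : Fin (n + 1)) : ℕ) = k + 1 := by
        simp [aZeroIso]
      exact dyn_T hG _ e2 (by omega) (by omega)
    rcases b with _ | b
    · by_cases hk : (k : ℕ) = 1
      · let z : Fin n := ⟨0, by omega⟩
        have e2 := e'.trans (extIso (legIso n z k rfl hk) none)
        have hv : legIso n z k rfl hk none = some z := by simp [legIso]
        rw [hv] at e2
        exact hz z rfl e2
      · exact absurd ((bad_T222 k (by omega) (by omega)).iso e'.symm) hG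
    · have := b.2
      by_cases h0 : (b : ℕ) = 0
      · exact hz b h0 e'
      by_cases hl : (b : ℕ) + 1 = n
      · have e2 := (e'.trans (swapIso _ _ _)).trans (extIso (aSuccIso n b hl) (some k))
        have hv : ((aSuccIso n b hl (some k) : Fin (n + 1)) : ℕ) = k := by
          simp [aSuccIso]
        exact dyn_T hG _ e2 (by omega) (by omega)
      · exact absurd ((bad_D k b (by omega) (by omega) (by omega) (by omega)).iso e'.symm) hG

/-- Removing a leaf. -/
lemma leaf_iso {V : Type*} {G : SimpleGraph V} (u w : V) (hu : ∀ v, G.Adj u v ↔ v = w)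
    (hw : w ∈ ({u}ᶜ : Set V)) :
    Nonempty (G ≃g Ext (G.induce ({u}ᶜ : Set V)) ⟨w, hw⟩) := by
  classical
  let f : Option ({u}ᶜ : Set V) → V := fun o => o.elim u (fun v => v.1)
  have hf : Function.Bijective f := by
    constructor
    · rintro (_ | ⟨a, ha⟩) (_ | ⟨b, hb⟩) h
      · rfl
      · exact absurd h.symm hb
      · exact absurd h ha
      · exact congrArg some (Subtype.ext h)
    · intro v
      by_cases hv : v = u
      · exact ⟨none, hv.symm⟩
      · exact ⟨some ⟨v, hv⟩, rfl⟩
  refine ⟨RelIso.symm ⟨Equiv.ofBijective f hf, ?_⟩⟩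
  rintro (_ | ⟨a, ha⟩) (_ | ⟨b, hb⟩)
  · simp [f]
  · simp [f, hu]
  · simp [f, G.adj_comm a u, hu]
  · simp [f]

universe u

theorem classify (n : ℕ) : ∀ {V : Type u} [Fintype V] (G : SimpleGraph V), Fintype.card V = n →
    G.IsTree → ¬ Bad G → IsDyn G := by
  induction n with
  | zero =>
    intro V _ G hc hT _
    have := hT.connected.nonempty
    exact absurd hc Fintype.card_ne_zero
  | succ n ih =>
    intro V _ G hc hT hG
    classical
    have := hT.connected.nonempty
    rcases subsingleton_or_nontrivial V with hs | hs
    · refine Or.inl ⟨1, le_rfl, ?_⟩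
      have : Unique V := uniqueOfSubsingleton (Classical.arbitrary V)
      exact ⟨⟨Equiv.ofUnique V (Fin 1), by
        intro a b
        simp [Subsingleton.elim a b]⟩⟩
    · obtain ⟨u, hu⟩ := hT.exists_vert_degree_one_of_nontrivial
      obtain ⟨w, hw, hw'⟩ := SimpleGraph.degree_eq_one_iff_existsUnique_adj.1 hu
      have hwu : w ∈ ({u}ᶜ : Set V) := fun h => G.loopless.irrefl u (by rw [← h] at hw ⊢; exact hw)
      obtain ⟨e⟩ := leaf_iso (G := G) u w (fun v => ⟨fun h => hw' v h, fun h => h ▸ hw⟩) hwu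
      refine dyn_step hG _ e (ih _ ?_ ⟨?_, ?_⟩ ?_)
      · have := Fintype.card_compl_set ({u} : Set V)
        simp only [hc, Fintype.card_unique] at this
        rw [Nat.add_sub_cancel] at this
        convert this using 1
      · exact hT.connected.induce_compl_singleton_of_degree_eq_one hu
      · exact hT.isAcyclic.induce _
      · intro hb
        exact hG (hb.map Subtype.val Subtype.val_injective fun a b h => h)

end Dyn

/-- A finite tree has index r < 2 iff it is isomorphic to one of the Dynkin
diagrams Aₙ (n ≥ 1), Dₙ (n ≥ 4), E₆, E₇, E₈. -/
theorem stmt16 {V : Type*} [Fintype V] (G : SimpleGraph V) [DecidableRel G.Adj]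
    (hT : G.IsTree)
    (r : ℝ)
    (hr : IsEigen (G.adjMatrix ℝ) r ∧ ∀ μ, IsEigen (G.adjMatrix ℝ) μ → μ ≤ r) :
    r < 2 ↔
      (∃ n, 1 ≤ n ∧ Nonempty (G ≃g AGraph n)) ∨
      (∃ n, 4 ≤ n ∧ Nonempty (G ≃g DGraph n)) ∨
      Nonempty (G ≃g E6Graph) ∨ Nonempty (G ≃g E7Graph) ∨ Nonempty (G ≃g E8Graph) := by
  constructor
  · intro h2
    have hG : ¬ Dyn.Bad G := fun hb => absurd (hb.le hr.2) (not_le.2 h2)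
    rcases Dyn.classify _ G rfl hT hG with h | ⟨n, k, ⟨e⟩, h1, h2, h3 | ⟨h3, h4⟩⟩
    · exact Or.inl h
    · exact Or.inr (Or.inl ⟨n + 1, by omega, ⟨e.trans (Dyn.dIso n (by omega) k h3)⟩⟩)
    · right; right
      have hn : n = 5 ∨ n = 6 ∨ n = 7 := by omega
      have hk (m : ℕ) (hm : 2 < m) (hnm : n = m) : Nonempty (G ≃g Dyn.Ext (AGraph m) ⟨2, hm⟩) := by
        subst hnm
        have : k = ⟨2, hm⟩ := Fin.ext h3
        exact ⟨this ▸ e⟩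
      rcases hn with h | h | h
      · exact Or.inl ((hk 5 (by omega) h).map fun e => e.trans Dyn.e6Iso)
      · exact Or.inr (Or.inl ((hk 6 (by omega) h).map fun e => e.trans Dyn.e7Iso))
      · exact Or.inr (Or.inr ((hk 7 (by omega) h).map fun e => e.trans Dyn.e8Iso))
  · intro h
    suffices hg : Dyn.Good G from hg.lt hr.1
    rcases h with ⟨n, hn, ⟨e⟩⟩ | ⟨n, hn, ⟨e⟩⟩ | ⟨⟨e⟩⟩ | ⟨⟨e⟩⟩ | ⟨⟨e⟩⟩
    · exact (Dyn.good_A n).iso e.symm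
    · obtain ⟨m, rfl⟩ : ∃ m, n = m + 1 := ⟨n - 1, by omega⟩
      let w : Fin m := ⟨1, by omega⟩
      exact (Dyn.good_D (by omega) w rfl).iso
        ((Dyn.dIso m (by omega) w rfl).trans e.symm)
    · exact Dyn.good_e6.iso (Dyn.e6Iso.trans e.symm)
    · exact Dyn.good_e7.iso (Dyn.e7Iso.trans e.symm)
    · exact Dyn.good_e8.iso (Dyn.e8Iso.trans e.symm)
end

section
/- A finite tree Γ has index r = 2 if and only if Γ is isomorphic to one of the extended Dynkin diagrams D̃_n (n ≥ 4), Ẽ_6, Ẽ_7, Ẽ_8. -/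
/-- The extended Dynkin diagram D̃ₙ on n+1 vertices: central path 2 − ⋯ − (n−2) with
leaves 0, 1 attached to vertex 2 and leaves n−1, n attached to vertex n−2. -/
def DtildeGraph (n : ℕ) : SimpleGraph (Fin (n + 1)) :=
  SimpleGraph.fromRel fun i j =>
    ((i : ℕ) = 0 ∧ (j : ℕ) = 2) ∨ ((i : ℕ) = 1 ∧ (j : ℕ) = 2) ∨
      (2 ≤ (i : ℕ) ∧ (j : ℕ) = (i : ℕ) + 1 ∧ (j : ℕ) ≤ n - 2) ∨
      ((i : ℕ) = n - 2 ∧ (j : ℕ) = n - 1) ∨ ((i : ℕ) = n - 2 ∧ (j : ℕ) = n)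

/-- The extended Dynkin diagram Ẽ₆: path 0 − ⋯ − 4, branch 2 − 5 − 6. -/
def E6tGraph : SimpleGraph (Fin 7) :=
  SimpleGraph.fromRel fun i j =>
    ((i : ℕ) + 1 = (j : ℕ) ∧ (j : ℕ) ≤ 4) ∨ ((i : ℕ) = 2 ∧ (j : ℕ) = 5) ∨
      ((i : ℕ) = 5 ∧ (j : ℕ) = 6)

/-- The extended Dynkin diagram Ẽ₇: path 0 − ⋯ − 6, leaf 7 attached to vertex 3. -/
def E7tGraph : SimpleGraph (Fin 8) :=
  SimpleGraph.fromRel fun i j =>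
    ((i : ℕ) + 1 = (j : ℕ) ∧ (j : ℕ) ≤ 6) ∨ ((i : ℕ) = 3 ∧ (j : ℕ) = 7)

/-- The extended Dynkin diagram Ẽ₈: path 0 − ⋯ − 7, leaf 8 attached to vertex 2. -/
def E8tGraph : SimpleGraph (Fin 9) :=
  SimpleGraph.fromRel fun i j =>
    ((i : ℕ) + 1 = (j : ℕ) ∧ (j : ℕ) ≤ 7) ∨ ((i : ℕ) = 2 ∧ (j : ℕ) = 8)


open Finset in
/-- `u` is a positive additive function: positive with neighbour sums equal to `2 u`. -/
def IsAddFn {V : Type*} [Fintype V] (G : SimpleGraph V) [DecidableRel G.Adj] (u : V → ℝ) : Prop :=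
  (∀ x, 0 < u x) ∧ ∀ x, ∑ y ∈ G.neighborFinset x, u y = 2 * u x

lemma sum_comm_nbr {V : Type*} [Fintype V] (G : SimpleGraph V) [DecidableRel G.Adj]
    (a b : V → ℝ) :
    ∑ x, a x * ∑ y ∈ G.neighborFinset x, b y = ∑ x, b x * ∑ y ∈ G.neighborFinset x, a y := by
  simp_rw [Finset.mul_sum]
  rw [Finset.sum_comm' (t' := Finset.univ) (s' := fun y => G.neighborFinset y)]
  · simp_rw [mul_comm]
  · intro x y
    simp [G.adj_comm]

lemma perron {V : Type*} [Fintype V] (G : SimpleGraph V) [DecidableRel G.Adj]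
    (hT : G.Connected)
    (hr : IsEigen (G.adjMatrix ℝ) 2 ∧ ∀ μ, IsEigen (G.adjMatrix ℝ) μ → μ ≤ 2) :
    ∃ u : V → ℝ, IsAddFn G u := by
  classical
  obtain ⟨⟨w, hw0, hw⟩, hmax⟩ := hr
  have hA : (G.adjMatrix ℝ).IsHermitian := by
    rw [Matrix.IsHermitian, Matrix.conjTranspose_eq_transpose_of_trivial]
    exact G.isSymm_adjMatrix
  let B : Matrix V V ℝ := (2 : ℝ) • 1 - G.adjMatrix ℝ
  have hBv : ∀ x : V → ℝ, B.mulVec x = (2 : ℝ) • x - (G.adjMatrix ℝ).mulVec x := by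
    intro x
    simp [B, Matrix.sub_mulVec, Matrix.smul_mulVec]
  have hBh : B.IsHermitian := by
    refine Matrix.IsHermitian.sub ?_ hA
    rw [Matrix.IsHermitian, Matrix.conjTranspose_eq_transpose_of_trivial]
    simp
  have hB : B.PosSemidef := by
    rw [hBh.posSemidef_iff_eigenvalues_nonneg]
    intro i
    have h1 := hBh.mulVec_eigenvectorBasis i
    set v : V → ℝ := ⇑(hBh.eigenvectorBasis i) with hv
    have hvne : v ≠ 0 := by
      intro h
      have : hBh.eigenvectorBasis i = 0 := by
        ext j
        exact congrFun h j
      exact hBh.eigenvectorBasis.toBasis.ne_zero i (by simpa using this)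
    have h2 := hmax (2 - hBh.eigenvalues i) ⟨v, hvne, by
      rw [hBv] at h1
      rw [sub_smul, ← h1]
      simp⟩
    simp only [Pi.zero_apply]
    linarith
  have key : B.mulVec (fun x => |w x|) = 0 := by
    rw [← hB.dotProduct_mulVec_zero_iff]
    apply le_antisymm _ (hB.dotProduct_mulVec_nonneg _)
    have e : ∀ z : V → ℝ, star z ⬝ᵥ B.mulVec z
        = 2 * ∑ x, z x * z x - ∑ x, ∑ y ∈ G.neighborFinset x, z x * z y := by
      intro z
      rw [hBv]
      simp only [star_trivial, dotProduct, Pi.sub_apply, Pi.smul_apply, smul_eq_mul,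
        SimpleGraph.adjMatrix_mulVec_apply, mul_sub, Finset.sum_sub_distrib, Finset.mul_sum]
      congr 1
      exact Finset.sum_congr rfl fun x _ => by ring
    have e0 : star w ⬝ᵥ B.mulVec w = 0 := by
      rw [hBv, hw]; simp
    rw [e] at e0 ⊢
    have : ∑ x, ∑ y ∈ G.neighborFinset x, w x * w y
        ≤ ∑ x, ∑ y ∈ G.neighborFinset x, |w x| * |w y| := by
      refine Finset.sum_le_sum fun x _ => Finset.sum_le_sum fun y _ => ?_
      rw [← abs_mul]; exact le_abs_self _
    simp only [abs_mul_abs_self]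
    linarith
  have hadd : ∀ x, ∑ y ∈ G.neighborFinset x, |w y| = 2 * |w x| := by
    intro x
    have := congrFun key x
    rw [hBv] at this
    simp only [Pi.sub_apply, Pi.smul_apply, smul_eq_mul,
        SimpleGraph.adjMatrix_mulVec_apply, Pi.zero_apply] at this
    linarith
  refine ⟨fun x => |w x|, ?_, hadd⟩
  by_contra hcon
  push Not at hcon
  obtain ⟨x, hx⟩ := hcon
  have hx0 : w x = 0 := by simpa using hx
  apply hw0
  funext z
  obtain ⟨p⟩ := hT.preconnected z x
  induction p with
  | nil => exact hx0
  | @cons a b c hab q ih =>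
    have hb := ih hx hx0
    have h := hadd b
    simp only [Pi.zero_apply] at hb
    rw [hb, abs_zero, mul_zero, Finset.sum_eq_zero_iff_of_nonneg (fun _ _ => abs_nonneg _)] at h
    have := h a (by simpa using hab.symm)
    simpa using this

lemma index_of_addFn {V : Type*} [Fintype V] (G : SimpleGraph V) [DecidableRel G.Adj]
    (hne : Nonempty V) (u : V → ℝ) (hu : IsAddFn G u) (r : ℝ)
    (hr : IsEigen (G.adjMatrix ℝ) r ∧ ∀ μ, IsEigen (G.adjMatrix ℝ) μ → μ ≤ r) : r = 2 := by
  obtain ⟨hpos, hadd⟩ := hu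
  obtain ⟨⟨w, hw0, hw⟩, hmax⟩ := hr
  apply le_antisymm
  · have hw' : ∀ x, ∑ y ∈ G.neighborFinset x, w y = r * w x := by
      intro x
      have := congrFun hw x
      simpa [SimpleGraph.adjMatrix_mulVec_apply] using this
    have h1 : ∀ x, r * |w x| ≤ ∑ y ∈ G.neighborFinset x, |w y| := by
      intro x
      calc r * |w x| ≤ |r| * |w x| := by gcongr; exact le_abs_self r
        _ = |∑ y ∈ G.neighborFinset x, w y| := by rw [hw', abs_mul]
        _ ≤ _ := Finset.abs_sum_le_sum_abs _ _
    have h2 : ∑ x, u x * (r * |w x|) ≤ ∑ x, u x * ∑ y ∈ G.neighborFinset x, |w y| :=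
      Finset.sum_le_sum fun x _ => mul_le_mul_of_nonneg_left (h1 x) (hpos x).le
    rw [sum_comm_nbr] at h2
    simp_rw [hadd] at h2
    obtain ⟨z, hz⟩ := Function.ne_iff.mp hw0
    have h3 : 0 < ∑ x, u x * |w x| :=
      Finset.sum_pos' (fun x _ => mul_nonneg (hpos x).le (abs_nonneg _))
        ⟨z, Finset.mem_univ _, mul_pos (hpos z) (abs_pos.mpr hz)⟩
    have h4 : r * ∑ x, u x * |w x| ≤ 2 * ∑ x, u x * |w x| := by
      rw [Finset.mul_sum, Finset.mul_sum]
      convert h2 using 2 <;> ring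
    exact le_of_mul_le_mul_right h4 h3
  · apply hmax
    refine ⟨u, ?_, ?_⟩
    · intro h
      obtain ⟨x⟩ := hne
      have := hpos x
      rw [h] at this
      simp at this
    · funext x
      rw [SimpleGraph.adjMatrix_mulVec_apply, hadd]; simp

lemma addFn_of_iso {V W : Type*} [Fintype V] [Fintype W] (G : SimpleGraph V) [DecidableRel G.Adj]
    (H : SimpleGraph W) [DecidableRel H.Adj] (e : G ≃g H) (d : W → ℝ) (hd : IsAddFn H d) :
    IsAddFn G (fun x => d (e x)) := by
  refine ⟨fun x => hd.1 _, fun x => ?_⟩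
  rw [← hd.2]
  refine Finset.sum_bij (fun y _ => e y) ?_ ?_ ?_ ?_
  · intro a ha
    simpa [e.map_adj_iff] using ha
  · intro a _ b _ h
    exact e.injective h
  · intro b hb
    refine ⟨e.symm b, ?_, by simp⟩
    simp only [SimpleGraph.mem_neighborFinset] at hb ⊢
    rw [← e.map_adj_iff]; simpa using hb
  · intros; rfl

/-- A locally injective homomorphism from a connected graph to an acyclic graph is injective. -/
lemma inj_of_locInj {V W : Type*} {G : SimpleGraph V} {H : SimpleGraph W}
    (hG : G.IsAcyclic) (hH : H.Preconnected) (f : W → V)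
    (hf : ∀ x y, H.Adj x y → G.Adj (f x) (f y))
    (hl : ∀ x y z, H.Adj x y → H.Adj x z → f y = f z → y = z) : Function.Injective f := by
  classical
  let F : H →g G := ⟨f, fun h => hf _ _ h⟩
  intro x y hxy
  by_contra hne
  obtain ⟨p, hp⟩ := (hH x y).exists_isPath
  have hm : (p.map F).IsPath := by
    rw [hG.isPath_iff_isChain]
    clear hxy hne
    induction p with
    | nil => simp
    | @cons a b c hab q ih =>
      cases q with
      | nil => simp
      | @cons _ d _ hbd q =>
        have hq := hp.of_cons
        have ih := ih hq
        simp only [SimpleGraph.Walk.map_cons, SimpleGraph.Walk.edges_cons] at ih ⊢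
        refine List.IsChain.cons_cons ?_ ih
        intro he
        have hda : a ≠ d := by
          have := (SimpleGraph.Walk.cons_isPath_iff _ _).mp hp
          rintro rfl
          apply this.2
          simp
        have h1 : F a = F d := by
          rw [Sym2.eq_iff] at he
          rcases he with ⟨h1, h2⟩ | ⟨h1, h2⟩
          · rw [h1, h2]
          · exact h1
        exact hda (hl b a d hab.symm hbd h1)
  have : ∀ (a b : V) (q : G.Walk a b), q.IsPath → a = b → q.length = 0 := by
    rintro a b q hq rfl
    rw [SimpleGraph.Walk.isPath_iff_nil] at hq
    exact SimpleGraph.Walk.length_eq_zero_iff.mpr hq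
  have h0 := this _ _ _ hm hxy
  rw [SimpleGraph.Walk.length_map] at h0
  exact hne (SimpleGraph.Walk.eq_of_length_eq_zero h0)

/-- A locally injective homomorphism between graphs with positive additive functions, from a
connected graph to a tree, is an isomorphism. -/
lemma iso_of_locInj {V W : Type*} [Fintype V] [Fintype W] {G : SimpleGraph V} [DecidableRel G.Adj]
    {H : SimpleGraph W} [DecidableRel H.Adj] (hG : G.IsTree) (u : V → ℝ) (hu : IsAddFn G u)
    (hH : H.Connected) (d : W → ℝ) (hd : IsAddFn H d) (f : W → V)
    (hf : ∀ x y, H.Adj x y → G.Adj (f x) (f y))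
    (hl : ∀ x y z, H.Adj x y → H.Adj x z → f y = f z → y = z) : Nonempty (G ≃g H) := by
  classical
  have hinj := inj_of_locInj hG.isAcyclic hH.preconnected f hf hl
  have hsub : ∀ x, (H.neighborFinset x).image f ⊆ G.neighborFinset (f x) := by
    intro x y hy
    simp only [Finset.mem_image, SimpleGraph.mem_neighborFinset] at hy ⊢
    obtain ⟨z, hz, rfl⟩ := hy
    exact hf _ _ hz
  have himg : ∀ x, ∑ y ∈ (H.neighborFinset x).image f, u y
      = ∑ y ∈ H.neighborFinset x, u (f y) := by
    intro x
    exact Finset.sum_image (fun a _ b _ h => hinj h)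
  have hle : ∀ x, ∑ y ∈ H.neighborFinset x, u (f y) ≤ 2 * u (f x) := by
    intro x
    rw [← himg, ← hu.2]
    exact Finset.sum_le_sum_of_subset_of_nonneg (hsub x) (fun y _ _ => (hu.1 y).le)
  have htot : ∑ x, d x * (∑ y ∈ H.neighborFinset x, u (f y)) = ∑ x, d x * (2 * u (f x)) := by
    rw [sum_comm_nbr H d (fun y => u (f y))]
    refine Finset.sum_congr rfl fun x _ => ?_
    rw [hd.2]; ring
  have heq : ∀ x, ∑ y ∈ H.neighborFinset x, u (f y) = 2 * u (f x) := by
    intro x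
    have := (Finset.sum_eq_sum_iff_of_le (fun x _ =>
      mul_le_mul_of_nonneg_left (hle x) (hd.1 x).le)).mp htot x (Finset.mem_univ _)
    exact mul_left_cancel₀ (hd.1 x).ne' this
  have hN : ∀ x y, G.Adj (f x) y → ∃ z, H.Adj x z ∧ f z = y := by
    intro x y hxy
    by_contra hcon
    have hy : y ∉ (H.neighborFinset x).image f := by
      intro h
      simp only [Finset.mem_image, SimpleGraph.mem_neighborFinset] at h
      exact hcon h
    have := Finset.sum_lt_sum_of_subset (f := u) (hsub x)
      (by simpa using hxy : y ∈ G.neighborFinset (f x)) hy (hu.1 y) (fun z _ _ => (hu.1 z).le)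
    rw [himg, heq, hu.2] at this
    exact lt_irrefl _ this
  have hsurj : Function.Surjective f := by
    obtain ⟨w⟩ := hH.nonempty
    intro z
    obtain ⟨p⟩ := hG.connected.preconnected z (f w)
    generalize hfw : f w = v at p
    induction p with
    | nil => exact ⟨w, hfw⟩
    | @cons a b c hab q ih =>
      obtain ⟨t, rfl⟩ := ih hfw
      obtain ⟨s, _, hs⟩ := hN t a hab.symm
      exact ⟨s, hs⟩
  let e : W ≃ V := Equiv.ofBijective f ⟨hinj, hsurj⟩
  refine ⟨(⟨e, ?_⟩ : H ≃g G).symm⟩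
  intro x y
  constructor
  · intro h
    obtain ⟨z, hz, hzy⟩ := hN x (f y) h
    rwa [← hinj hzy]
  · exact fun h => hf _ _ h

lemma connected_of_rank {W : Type*} (H : SimpleGraph W) (root : W) (m : W → ℕ)
    (h : ∀ x, x ≠ root → ∃ y, H.Adj x y ∧ m y < m x) : H.Connected := by
  have key : ∀ k x, m x ≤ k → H.Reachable x root := by
    intro k
    induction k with
    | zero =>
      intro x hx
      by_cases hxr : x = root
      · rw [hxr]
      · obtain ⟨y, _, hy⟩ := h x hxr
        omega
    | succ k ih =>
      intro x hx
      by_cases hxr : x = root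
      · rw [hxr]
      · obtain ⟨y, hxy, hy⟩ := h x hxr
        exact hxy.reachable.trans (ih y (by omega))
  have : Nonempty W := ⟨root⟩
  exact ⟨fun x y => (key _ x le_rfl).trans (key _ y le_rfl).symm⟩

lemma addFn_of_nat {W : Type*} [Fintype W] (H : SimpleGraph W) [DecidableRel H.Adj] (d : W → ℕ) (hpos : ∀ x, 0 < d x)
    (h : ∀ x, ∑ y, (if H.Adj x y then d y else 0) = 2 * d x) :
    IsAddFn H (fun x => (d x : ℝ)) := by
  refine ⟨fun x => Nat.cast_pos.mpr (hpos x), fun x => ?_⟩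
  rw [SimpleGraph.neighborFinset_eq_filter, ← Nat.cast_sum, Finset.sum_filter]
  have h2 : (2 * (d x : ℝ)) = ((2 * d x : ℕ) : ℝ) := by push_cast; ring
  rw [h2, Nat.cast_inj, ← h x]

instance : DecidableRel E6tGraph.Adj :=
  inferInstanceAs (DecidableRel (SimpleGraph.fromRel _).Adj)

lemma E6_addFn :
    IsAddFn E6tGraph (fun x => ((![1, 2, 3, 2, 1, 2, 1] : Fin 7 → ℕ) x : ℝ)) := by
  refine addFn_of_nat _ _ (by decide) (by decide)

instance : DecidableRel E7tGraph.Adj :=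
  inferInstanceAs (DecidableRel (SimpleGraph.fromRel _).Adj)

lemma E7_addFn :
    IsAddFn E7tGraph (fun x => ((![1, 2, 3, 4, 3, 2, 1, 2] : Fin 8 → ℕ) x : ℝ)) := by
  refine addFn_of_nat _ _ (by decide) (by decide)

instance : DecidableRel E8tGraph.Adj :=
  inferInstanceAs (DecidableRel (SimpleGraph.fromRel _).Adj)

lemma E8_addFn :
    IsAddFn E8tGraph (fun x => ((![2, 4, 6, 5, 4, 3, 2, 1, 3] : Fin 9 → ℕ) x : ℝ)) := by
  refine addFn_of_nat _ _ (by decide) (by decide)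

lemma E6_conn : E6tGraph.Connected := by
  refine connected_of_rank _ 0 (fun x => x.val) ?_
  unfold E6tGraph
  decide

lemma E7_conn : E7tGraph.Connected := by
  refine connected_of_rank _ 0 (fun x => x.val) ?_
  unfold E7tGraph
  decide

lemma E8_conn : E8tGraph.Connected := by
  refine connected_of_rank _ 0 (fun x => x.val) ?_
  unfold E8tGraph
  decide

lemma D_adj (m : ℕ) (i j : Fin (m + 4 + 1)) : (DtildeGraph (m + 4)).Adj i j ↔
    ((i.val ≤ 1 ∧ j.val = 2) ∨ (j.val ≤ 1 ∧ i.val = 2) ∨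
      (2 ≤ i.val ∧ j.val = i.val + 1 ∧ j.val ≤ m + 2) ∨
      (2 ≤ j.val ∧ i.val = j.val + 1 ∧ i.val ≤ m + 2) ∨
      (i.val = m + 2 ∧ m + 3 ≤ j.val) ∨ (j.val = m + 2 ∧ m + 3 ≤ i.val)) := by
  have := i.isLt
  have := j.isLt
  simp only [DtildeGraph, SimpleGraph.fromRel_adj, ne_eq, Fin.ext_iff]
  omega

lemma D_conn (m : ℕ) : (DtildeGraph (m + 4)).Connected := by
  refine connected_of_rank _ ⟨2, by omega⟩
    (fun x => if x.val = 2 then 0 else if x.val ≤ 1 then 1 else x.val) ?_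
  intro x hx
  have hx2 : x.val ≠ 2 := fun h => hx (Fin.ext h)
  have hlt := x.isLt
  by_cases h1 : x.val ≤ 1
  · refine ⟨⟨2, by omega⟩, ?_, ?_⟩
    · rw [D_adj]; simp; omega
    · simp; split_ifs <;> omega
  · by_cases h2 : x.val ≤ m + 2
    · refine ⟨⟨x.val - 1, by omega⟩, ?_, ?_⟩
      · rw [D_adj]; simp; omega
      · simp only; split_ifs <;> omega
    · refine ⟨⟨m + 2, by omega⟩, ?_, ?_⟩
      · rw [D_adj]; simp; omega
      · simp only; split_ifs <;> omega

lemma D_addFn (m : ℕ) [DecidableRel (DtildeGraph (m + 4)).Adj] :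
    IsAddFn (DtildeGraph (m + 4))
      (fun i => if i.val ≤ 1 ∨ m + 3 ≤ i.val then 1 else 2) := by
  constructor
  · intro x
    dsimp only
    split_ifs <;> norm_num
  · intro x
    have hlt := x.isLt
    beta_reduce
    have hs : ∀ S : Finset (Fin (m + 4 + 1)),
        (∀ j, (DtildeGraph (m + 4)).Adj x j ↔ j ∈ S) →
        (DtildeGraph (m + 4)).neighborFinset x = S := by
      intro S h
      ext j
      rw [SimpleGraph.mem_neighborFinset, h]
    rcases Nat.lt_or_ge x.val 2 with h1 | h1
    · rw [hs {⟨2, by omega⟩} (by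
        intro j; rw [D_adj]; simp only [Finset.mem_singleton, Fin.ext_iff]; omega)]
      rw [Finset.sum_singleton, if_neg (by simp), if_pos (by omega)]
      norm_num
    rcases Nat.lt_or_ge (m + 2) x.val with h2 | h2
    · rw [hs {⟨m + 2, by omega⟩} (by
        intro j; rw [D_adj]; simp only [Finset.mem_singleton, Fin.ext_iff]; omega)]
      rw [Finset.sum_singleton, if_neg (by simp), if_pos (by omega)]
      norm_num
    rw [if_neg (by omega : ¬ (x.val ≤ 1 ∨ m + 3 ≤ x.val))]
    by_cases h3 : x.val = 2
    · by_cases hm : m = 0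
      · rw [hs {⟨0, by omega⟩, ⟨1, by omega⟩, ⟨m + 3, by omega⟩, ⟨m + 4, by omega⟩} (by
          intro j; have := j.isLt; rw [D_adj]
          simp only [Finset.mem_insert, Finset.mem_singleton, Fin.ext_iff]; omega)]
        rw [Finset.sum_insert (by simp), Finset.sum_insert (by simp),
          Finset.sum_insert (by simp), Finset.sum_singleton]
        simp; norm_num
      · rw [hs {⟨0, by omega⟩, ⟨1, by omega⟩, ⟨3, by omega⟩} (by
          intro j; have := j.isLt; rw [D_adj]
          simp only [Finset.mem_insert, Finset.mem_singleton, Fin.ext_iff]; omega)]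
        rw [Finset.sum_insert (by simp), Finset.sum_insert (by simp), Finset.sum_singleton]
        rw [if_pos (by simp), if_pos (by simp), if_neg (by simp; omega)]
        norm_num
    · by_cases h4 : x.val = m + 2
      · rw [hs {⟨m + 1, by omega⟩, ⟨m + 3, by omega⟩, ⟨m + 4, by omega⟩} (by
          intro j; have := j.isLt; rw [D_adj]
          simp only [Finset.mem_insert, Finset.mem_singleton, Fin.ext_iff]; omega)]
        rw [Finset.sum_insert (by simp), Finset.sum_insert (by simp), Finset.sum_singleton]
        rw [if_neg (by simp; omega), if_pos (by simp), if_pos (by simp)]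
        norm_num
      · rw [hs {⟨x.val - 1, by omega⟩, ⟨x.val + 1, by omega⟩} (by
          intro j; have := j.isLt; rw [D_adj]
          simp only [Finset.mem_insert, Finset.mem_singleton, Fin.ext_iff]; omega)]
        rw [Finset.sum_insert (by simp [Fin.ext_iff]), Finset.sum_singleton]
        rw [if_neg (by dsimp only; omega), if_neg (by dsimp only; omega)]
        norm_num

/-- A non-backtracking sequence of length `k`. -/
def IsNB {V : Type*} (G : SimpleGraph V) (s : ℕ → V) (k : ℕ) : Prop :=
  (∀ i, i < k → G.Adj (s i) (s (i + 1))) ∧ ∀ i, i + 2 ≤ k → s i ≠ s (i + 2)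

lemma IsNB.mono {V : Type*} {G : SimpleGraph V} {s : ℕ → V} {k l : ℕ} (h : IsNB G s k)
    (hl : l ≤ k) : IsNB G s l :=
  ⟨fun i hi => h.1 i (by omega), fun i hi => h.2 i (by omega)⟩

lemma IsNB.inj {V : Type*} {G : SimpleGraph V} (hG : G.IsAcyclic) {s : ℕ → V} {k : ℕ}
    (h : IsNB G s k) : Function.Injective (fun i : Fin (k + 1) => s i.val) := by
  apply inj_of_locInj hG (SimpleGraph.pathGraph_preconnected (k + 1))
  · intro x y hxy
    rw [SimpleGraph.pathGraph_adj] at hxy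
    have := x.isLt
    have := y.isLt
    rcases hxy with hxy | hxy
    · rw [← hxy]; exact h.1 _ (by omega)
    · rw [← hxy]; exact (h.1 _ (by omega)).symm
  · intro x y z hxy hxz he
    rw [SimpleGraph.pathGraph_adj] at hxy hxz
    have := x.isLt
    have := y.isLt
    have := z.isLt
    apply Fin.ext
    rcases hxy with hxy | hxy <;> rcases hxz with hxz | hxz
    · omega
    · exfalso
      apply h.2 z.val (by omega)
      rw [show z.val + 2 = y.val by omega]
      exact he.symm
    · exfalso
      apply h.2 y.val (by omega)
      rw [show y.val + 2 = z.val by omega]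
      exact he
    · omega

lemma arm {V : Type*} [Fintype V] {G : SimpleGraph V} [DecidableRel G.Adj] (hG : G.IsAcyclic)
    (u : V → ℝ) (hu : IsAddFn G u) (c b : V) (hcb : G.Adj c b)
    (hdeg : ∀ x, x ≠ c → G.degree x ≤ 2) :
    ∃ (p : ℕ) (s : ℕ → V), 1 ≤ p ∧ IsNB G s p ∧ s 0 = c ∧ s 1 = b ∧
      ((p : ℝ) + 1) * (u c - u b) = u c := by
  classical
  by_contra hcon
  have key : ∀ k, 1 ≤ k → ∃ s : ℕ → V, IsNB G s k ∧ s 0 = c ∧ s 1 = b ∧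
      ∀ i ≤ k, u (s i) = u c - i * (u c - u b) := by
    intro k hk
    induction k, hk using Nat.le_induction with
    | base =>
      refine ⟨fun i => if i = 0 then c else b, ⟨?_, ?_⟩, by simp, by simp, ?_⟩
      · intro i hi
        obtain rfl : i = 0 := by omega
        simpa using hcb
      · intro i hi; omega
      · intro i hi
        interval_cases i <;> simp
    | succ k hk ih =>
      obtain ⟨s, hs, h0, h1, hus⟩ := ih
      obtain ⟨j, rfl⟩ : ∃ j, k = j + 1 := ⟨k - 1, by omega⟩
      have hadj : G.Adj (s j) (s (j + 1)) := hs.1 j (by omega)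
      have hne : s (j + 1) ≠ c := by
        intro h
        rw [← h0] at h
        have := hs.inj hG (a₁ := ⟨j + 1, by omega⟩) (a₂ := ⟨0, by omega⟩) h
        simp at this
      have hd := hdeg _ hne
      have hmem : s j ∈ G.neighborFinset (s (j + 1)) := by simpa using hadj.symm
      have hsum := hu.2 (s (j + 1))
      rw [← Finset.add_sum_erase _ _ hmem] at hsum
      have hcard : ((G.neighborFinset (s (j + 1))).erase (s j)).card ≤ 1 := by
        rw [Finset.card_erase_of_mem hmem, SimpleGraph.card_neighborFinset_eq_degree]
        omega
      have huj := hus j (by omega)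
      have huj1 := hus (j + 1) le_rfl
      push_cast at huj1
      have : Nonempty V := ⟨c⟩
      rcases Finset.card_le_one_iff_subset_singleton.mp hcard with ⟨y, hy⟩
      rcases Finset.subset_singleton_iff.mp hy with he | he
      · exfalso
        apply hcon
        refine ⟨j + 1, s, by omega, hs, h0, h1, ?_⟩
        rw [he, Finset.sum_empty] at hsum
        push_cast
        linarith
      · rw [he, Finset.sum_singleton] at hsum
        have hym : y ∈ (G.neighborFinset (s (j + 1))).erase (s j) := by rw [he]; simp
        rw [Finset.mem_erase, SimpleGraph.mem_neighborFinset] at hym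
        refine ⟨fun i => if i ≤ j + 1 then s i else y, ⟨?_, ?_⟩, by simpa using h0,
          by simpa using h1, ?_⟩
        · intro i hi
          by_cases hij : i = j + 1
          · subst hij; simpa using hym.2
          · simp only [show i ≤ j + 1 by omega, show i + 1 ≤ j + 1 by omega, if_true]
            exact hs.1 i (by omega)
        · intro i hi
          by_cases hij : i = j
          · subst hij; simpa using hym.1.symm
          · simp only [show i ≤ j + 1 by omega, show i + 2 ≤ j + 1 by omega, if_true]
            exact hs.2 i (by omega)
        · intro i hi
          by_cases hij : i ≤ j + 1
          · simp only [hij, if_true]; exact hus i hij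
          · obtain rfl : i = j + 1 + 1 := by omega
            simp only [hij, if_false]
            push_cast
            linarith
  have hV : 1 ≤ Fintype.card V := Fintype.card_pos_iff.mpr ⟨c⟩
  obtain ⟨s, hs, -⟩ := key _ hV
  have := Fintype.card_le_of_injective _ (hs.inj hG)
  simp at this


lemma mk_E6 {V : Type*} [Fintype V] {G : SimpleGraph V} [DecidableRel G.Adj] (hG : G.IsTree)
    (u : V → ℝ) (hu : IsAddFn G u) (c : V) (s t w : ℕ → V)
    (hs0 : s 0 = c) (ht0 : t 0 = c) (hw0 : w 0 = c)
    (hst : s 1 ≠ t 1) (hsw : s 1 ≠ w 1) (htw : t 1 ≠ w 1)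
    (hs : IsNB G s 2) (ht : IsNB G t 2) (hw : IsNB G w 2) :
    Nonempty (G ≃g E6tGraph) := by
  have a1 := hs.1 0 (by omega)
  have a2 := hs.1 1 (by omega)
  have b1 := ht.1 0 (by omega)
  have b2 := ht.1 1 (by omega)
  have c1 := hw.1 0 (by omega)
  have c2 := hw.1 1 (by omega)
  have a3 := hs.2 0 (by omega)
  have b3 := ht.2 0 (by omega)
  have c3 := hw.2 0 (by omega)
  rw [hs0] at a1 a3
  rw [ht0] at b1 b3
  rw [hw0] at c1 c3
  simp only [zero_add, Nat.reduceAdd] at *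
  refine iso_of_locInj hG u hu E6_conn _ E6_addFn
    ![s 2, s 1, c, t 1, t 2, w 1, w 2] ?_ ?_
  · intro x y
    fin_cases x <;> fin_cases y <;>
      first
      | exact fun h => absurd h (by decide)
      | (intro _; first | assumption | (apply SimpleGraph.Adj.symm; assumption))
  · intro x y z
    fin_cases x <;> fin_cases y <;>
      first
      | exact fun h => absurd h (by decide)
      | (fin_cases z <;>
          first
          | exact fun _ h => absurd h (by decide)
          | exact fun _ _ _ => rfl
          | (intro _ _ h; exfalso; revert h
             first | assumption | (apply Ne.symm; assumption)))

lemma mk_E7 {V : Type*} [Fintype V] {G : SimpleGraph V} [DecidableRel G.Adj] (hG : G.IsTree)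
    (u : V → ℝ) (hu : IsAddFn G u) (c : V) (s t w : ℕ → V)
    (hs0 : s 0 = c) (ht0 : t 0 = c) (hw0 : w 0 = c)
    (hst : s 1 ≠ t 1) (hsw : s 1 ≠ w 1) (htw : t 1 ≠ w 1)
    (hs : IsNB G s 3) (ht : IsNB G t 3) (hw : IsNB G w 1) :
    Nonempty (G ≃g E7tGraph) := by
  have a1 := hs.1 0 (by omega)
  have a2 := hs.1 1 (by omega)
  have a4 := hs.1 2 (by omega)
  have b1 := ht.1 0 (by omega)
  have b2 := ht.1 1 (by omega)
  have b4 := ht.1 2 (by omega)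
  have c1 := hw.1 0 (by omega)
  have a3 := hs.2 0 (by omega)
  have b3 := ht.2 0 (by omega)
  have a5 := hs.2 1 (by omega)
  have b5 := ht.2 1 (by omega)
  rw [hs0] at a1 a3
  rw [ht0] at b1 b3
  rw [hw0] at c1
  simp only [zero_add, Nat.reduceAdd] at *
  refine iso_of_locInj hG u hu E7_conn _ E7_addFn
    ![s 3, s 2, s 1, c, t 1, t 2, t 3, w 1] ?_ ?_
  · intro x y
    fin_cases x <;> fin_cases y <;>
      first
      | exact fun h => absurd h (by decide)
      | (intro _; first | assumption | (apply SimpleGraph.Adj.symm; assumption))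
  · intro x y z
    fin_cases x <;> fin_cases y <;>
      first
      | exact fun h => absurd h (by decide)
      | (fin_cases z <;>
          first
          | exact fun _ h => absurd h (by decide)
          | exact fun _ _ _ => rfl
          | (intro _ _ h; exfalso; revert h
             first | assumption | (apply Ne.symm; assumption)))

lemma mk_E8 {V : Type*} [Fintype V] {G : SimpleGraph V} [DecidableRel G.Adj] (hG : G.IsTree)
    (u : V → ℝ) (hu : IsAddFn G u) (c : V) (s t w : ℕ → V)
    (hs0 : s 0 = c) (ht0 : t 0 = c) (hw0 : w 0 = c)
    (hst : s 1 ≠ t 1) (hsw : s 1 ≠ w 1) (htw : t 1 ≠ w 1)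
    (hs : IsNB G s 2) (ht : IsNB G t 5) (hw : IsNB G w 1) :
    Nonempty (G ≃g E8tGraph) := by
  have a1 := hs.1 0 (by omega)
  have a2 := hs.1 1 (by omega)
  have b1 := ht.1 0 (by omega)
  have b2 := ht.1 1 (by omega)
  have b4 := ht.1 2 (by omega)
  have b6 := ht.1 3 (by omega)
  have b7 := ht.1 4 (by omega)
  have c1 := hw.1 0 (by omega)
  have a3 := hs.2 0 (by omega)
  have b3 := ht.2 0 (by omega)
  have b5 := ht.2 1 (by omega)
  have b8 := ht.2 2 (by omega)
  have b9 := ht.2 3 (by omega)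
  rw [hs0] at a1 a3
  rw [ht0] at b1 b3
  rw [hw0] at c1
  simp only [zero_add, Nat.reduceAdd] at *
  refine iso_of_locInj hG u hu E8_conn _ E8_addFn
    ![s 2, s 1, c, t 1, t 2, t 3, t 4, t 5, w 1] ?_ ?_
  · intro x y
    fin_cases x <;> fin_cases y <;>
      first
      | exact fun h => absurd h (by decide)
      | (intro _; first | assumption | (apply SimpleGraph.Adj.symm; assumption))
  · intro x y z
    fin_cases x <;> fin_cases y <;>
      first
      | exact fun h => absurd h (by decide)
      | (fin_cases z <;>
          first
          | exact fun _ h => absurd h (by decide)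
          | exact fun _ _ _ => rfl
          | (intro _ _ h; exfalso; revert h
             first | assumption | (apply Ne.symm; assumption)))


lemma mk_D4 {V : Type*} [Fintype V] {G : SimpleGraph V} [DecidableRel G.Adj] (hG : G.IsTree)
    (u : V → ℝ) (hu : IsAddFn G u)
    (c : V) (h4 : 4 ≤ G.degree c) : Nonempty (G ≃g DtildeGraph 4) := by
  classical
  rw [← SimpleGraph.card_neighborFinset_eq_degree] at h4
  obtain ⟨S, hS, hc⟩ := Finset.exists_subset_card_eq h4
  let e : Fin 4 ≃ S := (S.equivFinOfCardEq hc).symm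
  have hadj : ∀ i, G.Adj c (e i) := fun i => by
    simpa using hS (e i).2
  have hinj : ∀ i j, ((e i : V) = e j) → i = j := fun i j h => e.injective (Subtype.ext h)
  refine iso_of_locInj hG u hu (D_conn 0) _ (D_addFn 0)
    ![e 0, e 1, c, e 2, e 3] ?_ ?_
  · intro x y hxy
    rw [D_adj] at hxy
    fin_cases x <;> fin_cases y <;>
      first
      | exact absurd hxy (by decide)
      | exact hadj _
      | exact (hadj _).symm
  · intro x y z hxy hxz
    rw [D_adj] at hxy hxz
    fin_cases x <;> fin_cases y <;>
      first
      | exact absurd hxy (by decide)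
      | (fin_cases z <;>
          first
          | exact absurd hxz (by decide)
          | exact fun _ => rfl
          | exact fun h => absurd (hinj _ _ h) (by decide))

lemma mk_D {V : Type*} [Fintype V] {G : SimpleGraph V} [DecidableRel G.Adj] (hG : G.IsTree)
    (u : V → ℝ) (hu : IsAddFn G u)
    (m : ℕ) (hm : 1 ≤ m) (s : ℕ → V) (hs : IsNB G s m) (a a' e e' : V)
    (ha : G.Adj (s 0) a) (ha' : G.Adj (s 0) a') (haa : a ≠ a') (has : a ≠ s 1) (has' : a' ≠ s 1)
    (he : G.Adj (s m) e) (he' : G.Adj (s m) e') (hee : e ≠ e') (hes : e ≠ s (m - 1))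
    (hes' : e' ≠ s (m - 1)) : Nonempty (G ≃g DtildeGraph (m + 4)) := by
  classical
  let f : ℕ → V := fun i => if i = 0 then a else if i = 1 then a' else
    if i = m + 3 then e else if i = m + 4 then e' else s (i - 2)
  have f0 : f 0 = a := by simp [f]
  have f1 : f 1 = a' := by simp [f]
  have f3 : f (m + 3) = e := by simp [f]
  have f4 : f (m + 4) = e' := by simp [f]
  have fs : ∀ i, i ≤ m → f (i + 2) = s i := by
    intro i hi
    simp only [f]
    rw [if_neg (by omega), if_neg (by omega), if_neg (by omega), if_neg (by omega)]
    simp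
  have split : ∀ i, i < m + 4 + 1 → i = 0 ∨ i = 1 ∨ i = m + 3 ∨ i = m + 4 ∨
      ∃ j, j ≤ m ∧ i = j + 2 := by
    intro i hi
    by_cases h : 2 ≤ i ∧ i ≤ m + 2
    · exact Or.inr (Or.inr (Or.inr (Or.inr ⟨i - 2, by omega, by omega⟩)))
    · omega
  refine iso_of_locInj hG u hu (D_conn m) _ (D_addFn m) (fun i => f i.val) ?_ ?_
  · have hmain : ∀ i j : ℕ, ((i ≤ 1 ∧ j = 2) ∨ (2 ≤ i ∧ j = i + 1 ∧ j ≤ m + 2) ∨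
        (i = m + 2 ∧ m + 3 ≤ j ∧ j < m + 5)) → G.Adj (f i) (f j) := by
      intro i j h
      rcases h with ⟨h1, rfl⟩ | ⟨h1, rfl, h2⟩ | ⟨rfl, h1, h2⟩
      · rw [fs 0 (by omega)]
        rcases (by omega : i = 0 ∨ i = 1) with rfl | rfl
        · rw [f0]; exact ha.symm
        · rw [f1]; exact ha'.symm
      · obtain ⟨k, rfl⟩ : ∃ k, i = k + 2 := ⟨i - 2, by omega⟩
        rw [fs k (by omega), show k + 2 + 1 = (k + 1) + 2 by ring, fs (k + 1) (by omega)]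
        exact hs.1 k (by omega)
      · rw [fs m le_rfl]
        rcases (by omega : j = m + 3 ∨ j = m + 4) with rfl | rfl
        · rw [f3]; exact he
        · rw [f4]; exact he'
    intro x y hxy
    rw [D_adj] at hxy
    have := x.isLt
    have := y.isLt
    by_cases h : ((x.val ≤ 1 ∧ y.val = 2) ∨ (2 ≤ x.val ∧ y.val = x.val + 1 ∧ y.val ≤ m + 2) ∨
        (x.val = m + 2 ∧ m + 3 ≤ y.val ∧ y.val < m + 5))
    · exact hmain _ _ h
    · exact (hmain _ _ (by omega)).symm
  · have hmain : ∀ i j : ℕ, ((i = 0 ∧ j = 1) ∨ (i ≤ 1 ∧ j = 3) ∨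
        (2 ≤ i ∧ j = i + 2 ∧ j ≤ m + 2) ∨ (i = m + 1 ∧ m + 3 ≤ j ∧ j < m + 5) ∨
        (i = m + 3 ∧ j = m + 4)) → f i ≠ f j := by
      intro i j h
      rcases h with ⟨rfl, rfl⟩ | ⟨h1, rfl⟩ | ⟨h1, rfl, h2⟩ | ⟨rfl, h1, h2⟩ | ⟨rfl, rfl⟩
      · rw [f0, f1]; exact haa
      · rw [fs 1 hm]
        rcases (by omega : i = 0 ∨ i = 1) with rfl | rfl
        · rw [f0]; exact has
        · rw [f1]; exact has'
      · obtain ⟨k, rfl⟩ : ∃ k, i = k + 2 := ⟨i - 2, by omega⟩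
        rw [fs k (by omega), fs (k + 2) (by omega)]
        exact hs.2 k (by omega)
      · rw [show m + 1 = (m - 1) + 2 by omega, fs (m - 1) (by omega)]
        rcases (by omega : j = m + 3 ∨ j = m + 4) with rfl | rfl
        · rw [f3]; exact hes.symm
        · rw [f4]; exact hes'.symm
      · rw [f3, f4]; exact hee
    intro x y z hxy hxz hf
    rw [D_adj] at hxy hxz
    have := x.isLt
    have := y.isLt
    have := z.isLt
    by_contra hne
    have hne' : y.val ≠ z.val := fun h => hne (Fin.ext h)
    rcases Nat.lt_or_gt_of_ne hne' with h | h
    · exact hmain _ _ (by omega) hf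
    · exact hmain _ _ (by omega) hf.symm

lemma exists_two {V : Type*} [Fintype V] {G : SimpleGraph V} [DecidableRel G.Adj] (hG : G.IsTree)
    (u : V → ℝ) (hu : IsAddFn G u)
    (x b : V) (h : 3 ≤ G.degree x) :
    ∃ a a', G.Adj x a ∧ G.Adj x a' ∧ a ≠ a' ∧ a ≠ b ∧ a' ≠ b := by
  classical
  have : 1 < ((G.neighborFinset x).erase b).card := by
    have := Finset.pred_card_le_card_erase (s := G.neighborFinset x) (a := b)
    rw [SimpleGraph.card_neighborFinset_eq_degree] at this
    omega
  obtain ⟨a, ha, a', ha', hne⟩ := Finset.one_lt_card.mp this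
  simp only [Finset.mem_erase, SimpleGraph.mem_neighborFinset] at ha ha'
  exact ⟨a, a', ha.2, ha'.2, hne, ha.1, ha'.1⟩

lemma mk_D_of_two {V : Type*} [Fintype V] {G : SimpleGraph V} [DecidableRel G.Adj] (hG : G.IsTree)
    (u : V → ℝ) (hu : IsAddFn G u)
    (x y : V) (hxy : x ≠ y) (hx : 3 ≤ G.degree x) (hy : 3 ≤ G.degree y) :
    ∃ n, 4 ≤ n ∧ Nonempty (G ≃g DtildeGraph n) := by
  classical
  obtain ⟨p, hp⟩ := (hG.connected.preconnected x y).exists_isPath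
  have hm : 1 ≤ p.length := by
    by_contra h
    exact hxy (SimpleGraph.Walk.eq_of_length_eq_zero (by omega : p.length = 0))
  obtain ⟨a, a', h1, h2, h3, h4, h5⟩ := exists_two hG u hu x (p.getVert 1) hx
  obtain ⟨e, e', k1, k2, k3, k4, k5⟩ := exists_two hG u hu y (p.getVert (p.length - 1)) hy
  refine ⟨p.length + 4, by omega, mk_D hG u hu p.length hm p.getVert ⟨?_, ?_⟩ a a' e e'
    (by simpa using h1) (by simpa using h2) h3 h4 h5 (by simpa using k1) (by simpa using k2)
    k3 k4 k5⟩
  · intro i hi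
    exact p.adj_getVert_succ hi
  · intro i hi h
    have := hp.getVert_injOn (by simp; omega) (by simp; omega) h
    omega

lemma mk_E {V : Type*} [Fintype V] {G : SimpleGraph V} [DecidableRel G.Adj] (hG : G.IsTree)
    (u : V → ℝ) (hu : IsAddFn G u)
    (c : V) (s t w : ℕ → V) (p q k : ℕ) (hpq : p ≤ q) (hqk : q ≤ k) (hp : 1 ≤ p)
    (hs0 : s 0 = c) (ht0 : t 0 = c) (hw0 : w 0 = c)
    (hst : s 1 ≠ t 1) (hsw : s 1 ≠ w 1) (htw : t 1 ≠ w 1)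
    (hs : IsNB G s p) (ht : IsNB G t q) (hw : IsNB G w k)
    (h : (q + 1) * (k + 1) + (p + 1) * (k + 1) + (p + 1) * (q + 1) = (p + 1) * (q + 1) * (k + 1)) :
    Nonempty (G ≃g E6tGraph) ∨ Nonempty (G ≃g E7tGraph) ∨ Nonempty (G ≃g E8tGraph) := by
  have hp2 : p ≤ 2 := by
    by_contra hcon
    have : 4 * ((q + 1) * (k + 1)) ≤ (p + 1) * ((q + 1) * (k + 1)) :=
      Nat.mul_le_mul_right _ (by omega)
    have h1 : (p + 1) * (k + 1) ≤ (q + 1) * (k + 1) := Nat.mul_le_mul_right _ (by omega)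
    have h2 : (p + 1) * (q + 1) ≤ (k + 1) * (q + 1) := Nat.mul_le_mul_right _ (by omega)
    have h3 : 0 < (q + 1) * (k + 1) := by positivity
    nlinarith
  rcases (by omega : p = 1 ∨ p = 2) with rfl | rfl
  · have hq : q ≤ 3 := by
      by_contra hcon
      have : 5 * (k + 1) ≤ (q + 1) * (k + 1) := Nat.mul_le_mul_right _ (by omega)
      nlinarith
    interval_cases q
    · omega
    · right; right
      exact mk_E8 hG u hu c t w s ht0 hw0 hs0 htw hst.symm hsw.symm ht
        (hw.mono (by omega)) hs
    · right; left
      exact mk_E7 hG u hu c t w s ht0 hw0 hs0 htw hst.symm hsw.symm ht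
        (hw.mono (by omega)) hs
  · left
    exact mk_E6 hG u hu c s t w hs0 ht0 hw0 hst hsw htw hs (ht.mono hpq)
        (hw.mono (by omega))

lemma classify {V : Type*} [Fintype V] {G : SimpleGraph V} [DecidableRel G.Adj] (hG : G.IsTree)
    (u : V → ℝ) (hu : IsAddFn G u) : (∃ n, 4 ≤ n ∧ Nonempty (G ≃g DtildeGraph n)) ∨
      Nonempty (G ≃g E6tGraph) ∨ Nonempty (G ≃g E7tGraph) ∨ Nonempty (G ≃g E8tGraph) := by
  classical
  by_cases h4 : ∃ c, 4 ≤ G.degree c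
  · obtain ⟨c, hc⟩ := h4
    exact Or.inl ⟨4, le_rfl, mk_D4 hG u hu c hc⟩
  push Not at h4
  by_cases h2 : ∃ x y, x ≠ y ∧ 3 ≤ G.degree x ∧ 3 ≤ G.degree y
  · obtain ⟨x, y, h1, h2, h3⟩ := h2
    exact Or.inl (mk_D_of_two hG u hu x y h1 h2 h3)
  push Not at h2
  right
  obtain ⟨c, hc⟩ : ∃ c, ∀ x, x ≠ c → G.degree x ≤ 2 := by
    by_cases h3 : ∃ c, 3 ≤ G.degree c
    · obtain ⟨c, hc⟩ := h3
      exact ⟨c, fun x hx => by have := h2 c x hx.symm hc; omega⟩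
    · push Not at h3
      obtain ⟨c⟩ := hG.connected.nonempty
      exact ⟨c, fun x _ => by have := h3 x; omega⟩
  have harm := fun b hb => arm hG.isAcyclic u hu c b hb hc
  have hlt : ∀ b ∈ G.neighborFinset c, u b < u c := by
    intro b hb
    obtain ⟨p, s, _, _, _, _, h⟩ := harm b (by simpa using hb)
    have hpos := hu.1 c
    by_contra hcon
    have : ((p : ℝ) + 1) * (u c - u b) ≤ 0 :=
      mul_nonpos_of_nonneg_of_nonpos (by positivity) (by linarith)
    linarith
  have hsum := hu.2 c
  have hdeg : G.degree c = 3 := by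
    by_contra hne
    have hle : G.degree c ≤ 2 := by have := h4 c; omega
    have hpos := hu.1 c
    by_cases h0 : (G.neighborFinset c).Nonempty
    · have h1 := Finset.sum_lt_sum_of_nonempty h0 hlt
      rw [hsum, Finset.sum_const, SimpleGraph.card_neighborFinset_eq_degree, nsmul_eq_mul] at h1
      have : (G.degree c : ℝ) ≤ 2 := by exact_mod_cast hle
      nlinarith
    · rw [Finset.not_nonempty_iff_eq_empty] at h0
      rw [h0, Finset.sum_empty] at hsum
      linarith
  rw [← SimpleGraph.card_neighborFinset_eq_degree, Finset.card_eq_three] at hdeg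
  obtain ⟨x, y, z, hxy, hxz, hyz, hN⟩ := hdeg
  have hadj : ∀ b, b = x ∨ b = y ∨ b = z → G.Adj c b := by
    intro b hb
    rw [← SimpleGraph.mem_neighborFinset, hN]
    simpa using hb
  rw [hN, Finset.sum_insert (by simp [hxy, hxz]), Finset.sum_insert (by simp [hyz]),
    Finset.sum_singleton] at hsum
  obtain ⟨p, s, hp, hs, hs0, hs1, hps⟩ := harm x (hadj x (by simp))
  obtain ⟨q, t, hq, ht, ht0, ht1, hqt⟩ := harm y (hadj y (by simp))
  obtain ⟨k, w, hk, hw, hw0, hw1, hkw⟩ := harm z (hadj z (by simp))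
  have hst : s 1 ≠ t 1 := by rw [hs1, ht1]; exact hxy
  have hsw : s 1 ≠ w 1 := by rw [hs1, hw1]; exact hxz
  have htw : t 1 ≠ w 1 := by rw [ht1, hw1]; exact hyz
  have hnum : (q + 1) * (k + 1) + (p + 1) * (k + 1) + (p + 1) * (q + 1)
      = (p + 1) * (q + 1) * (k + 1) := by
    have hpos := hu.1 c
    have : (((q : ℝ) + 1) * (k + 1) + (p + 1) * (k + 1) + (p + 1) * (q + 1)) * u c
        = ((p + 1) * (q + 1) * (k + 1)) * u c := by
      have e : u c = (u c - u x) + (u c - u y) + (u c - u z) := by linarith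
      calc _ = ((q : ℝ) + 1) * (k + 1) * u c + (p + 1) * (k + 1) * u c
            + (p + 1) * (q + 1) * u c := by ring
        _ = ((q : ℝ) + 1) * (k + 1) * ((p + 1) * (u c - u x))
            + (p + 1) * (k + 1) * ((q + 1) * (u c - u y))
            + (p + 1) * (q + 1) * ((k + 1) * (u c - u z)) := by rw [hps, hqt, hkw]
        _ = ((p + 1) * (q + 1) * (k + 1)) * ((u c - u x) + (u c - u y) + (u c - u z)) := by ring
        _ = _ := by rw [← e]
    have := mul_right_cancel₀ hpos.ne' this
    exact_mod_cast this
  rcases le_total p q with h1 | h1 <;> rcases le_total q k with h2 | h2 <;>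
    rcases le_total p k with h3 | h3
  · exact mk_E hG u hu c s t w p q k h1 h2 hp hs0 ht0 hw0 hst hsw htw hs ht hw (by linarith)
  · exact mk_E hG u hu c s t w p q k h1 h2 hp hs0 ht0 hw0 hst hsw htw hs ht hw (by linarith)
  · exact mk_E hG u hu c s w t p k q h3 h2 hp hs0 hw0 ht0 hsw hst htw.symm hs hw ht (by linarith)
  · exact mk_E hG u hu c w s t k p q h3 h1 hk hw0 hs0 ht0 hsw.symm htw.symm hst hw hs ht
      (by linarith)
  · exact mk_E hG u hu c t s w q p k h1 h3 hq ht0 hs0 hw0 hst.symm htw hsw ht hs hw (by linarith)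
  · exact mk_E hG u hu c t w s q k p h2 h3 hq ht0 hw0 hs0 htw hst.symm hsw.symm ht hw hs
      (by linarith)
  · exact mk_E hG u hu c w t s k q p h2 h1 hk hw0 ht0 hs0 htw.symm hsw.symm hst.symm hw ht hs
      (by linarith)
  · exact mk_E hG u hu c w t s k q p h2 h1 hk hw0 ht0 hs0 htw.symm hsw.symm hst.symm hw ht hs
      (by linarith)

/-- A finite tree has index r = 2 iff it is isomorphic to one of the
extended Dynkin diagrams D̃ₙ (n ≥ 4), Ẽ₆, Ẽ₇, Ẽ₈. -/
theorem stmt17 {V : Type*} [Fintype V] (G : SimpleGraph V) [DecidableRel G.Adj]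
    (hT : G.IsTree)
    (r : ℝ)
    (hr : IsEigen (G.adjMatrix ℝ) r ∧ ∀ μ, IsEigen (G.adjMatrix ℝ) μ → μ ≤ r) :
    r = 2 ↔
      (∃ n, 4 ≤ n ∧ Nonempty (G ≃g DtildeGraph n)) ∨
      Nonempty (G ≃g E6tGraph) ∨ Nonempty (G ≃g E7tGraph) ∨ Nonempty (G ≃g E8tGraph) := by
  classical
  constructor
  · rintro rfl
    obtain ⟨u, hu⟩ := perron G hT.connected hr
    exact classify hT u hu
  · have hne := hT.connected.nonempty
    rintro (⟨n, hn, ⟨e⟩⟩ | ⟨⟨e⟩⟩ | ⟨⟨e⟩⟩ | ⟨⟨e⟩⟩)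
    · obtain ⟨m, rfl⟩ : ∃ m, n = m + 4 := ⟨n - 4, by omega⟩
      exact index_of_addFn G hne _ (addFn_of_iso G _ e _ (D_addFn m)) r hr
    · exact index_of_addFn G hne _ (addFn_of_iso G _ e _ E6_addFn) r hr
    · exact index_of_addFn G hne _ (addFn_of_iso G _ e _ E7_addFn) r hr
    · exact index_of_addFn G hne _ (addFn_of_iso G _ e _ E8_addFn) r hr
end
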